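/- arXiv:1804.10859 — 2 statements merged into one kernel-verified Lean document; each statement's English description precedes it below -/
import Mathlib

section
/- Discrete energy balance for the second-order (J=2) auxiliary-variable scheme (Theorem 3.1, case J=2), in the scalar form obtained after testing the scheme with the velocity: let Δt > 0 and ν ≥ 0 be real numbers, and let R : ℕ → ℝ and G : ℕ → ℝ be sequences with G(n) ≥ 0 for all n, such that for every n ≥ 1 the discrete energy relation 2·R(n+1)·((3/2)·R(n+1) − 2·R(n) + (1/2)·R(n−1)) = −ν·Δt·G(n+1) holds. Define Q(n) = (1/2)·(R(n)² + (2·R(n) − R(n−1))²) for n ≥ 1. Then for every n ≥ 1, Q(n+1) − Q(n) = −(1/2)·(R(n+1) − 2·R(n) + R(n−1))² − ν·Δt·G(n+1). -/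
/-- Discrete energy balance for the second-order (J=2) auxiliary-variable scheme. -/
theorem stmt_1 (Δt ν : ℝ) (hΔt : 0 < Δt) (hν : 0 ≤ ν)
    (R G : ℕ → ℝ) (hG : ∀ n, 0 ≤ G n)
    (hrel : ∀ n : ℕ, 1 ≤ n →
      2 * R (n + 1) * ((3 / 2) * R (n + 1) - 2 * R n + (1 / 2) * R (n - 1)) =
        -ν * Δt * G (n + 1))
    (Q : ℕ → ℝ)
    (hQ : ∀ n : ℕ, 1 ≤ n → Q n = (1 / 2) * (R n ^ 2 + (2 * R n - R (n - 1)) ^ 2)) :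
    ∀ n : ℕ, 1 ≤ n → Q (n + 1) - Q n =
      -(1 / 2) * (R (n + 1) - 2 * R n + R (n - 1)) ^ 2 - ν * Δt * G (n + 1) := by
  intro n hn
  have h := hrel n hn
  rw [hQ (n + 1) (by omega), hQ n hn, Nat.add_sub_cancel]
  -- With `a, b, c` the values of `R` at `n + 1, n, n - 1`, this is the BDF2 identity
  -- `2a(3a/2 - 2b + c/2) = (a² + (2a - b)² - b² - (2b - c)² + (a - 2b + c)²) / 2`.
  linear_combination h
end

section
/- Unconditional stability of the second-order (J=2) scheme: let Δt > 0 and ν ≥ 0 be real numbers, and let R : ℕ → ℝ and G : ℕ → ℝ be sequences with G(n) ≥ 0 for all n, such that for every n ≥ 1 one has 2·R(n+1)·((3/2)·R(n+1) − 2·R(n) + (1/2)·R(n−1)) = −ν·Δt·G(n+1). Define Q(n) = (1/2)·(R(n)² + (2·R(n) − R(n−1))²) for n ≥ 1. Then Q is nonincreasing on n ≥ 1; in particular Q(n) ≤ Q(1) for every n ≥ 1, regardless of the size of Δt. -/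
/-! With `a = R (n + 1)`, `b = R n`, `c = R (n - 1)`, the BDF2 identity
`2 a (3/2 a - 2 b + 1/2 c) = Q (n + 1) - Q n + 1/2 (a - 2 b + c)²`
shows that one step changes `Q` by a nonpositive right-hand side minus a square. -/

/-- Unconditional stability of the second-order (J=2) scheme: the modified
energy `Q` is nonincreasing on `n ≥ 1`, and in particular `Q n ≤ Q 1` for all
`n ≥ 1`. -/
theorem stmt_3 (Δt ν : ℝ) (hΔt : 0 < Δt) (hν : 0 ≤ ν)
    (R G : ℕ → ℝ) (hG : ∀ n, 0 ≤ G n)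
    (hrel : ∀ n : ℕ, 1 ≤ n →
      2 * R (n + 1) * ((3 / 2) * R (n + 1) - 2 * R n + (1 / 2) * R (n - 1)) =
        -ν * Δt * G (n + 1))
    (Q : ℕ → ℝ)
    (hQ : ∀ n : ℕ, 1 ≤ n → Q n = (1 / 2) * (R n ^ 2 + (2 * R n - R (n - 1)) ^ 2)) :
    (∀ m n : ℕ, 1 ≤ m → m ≤ n → Q n ≤ Q m) ∧ ∀ n : ℕ, 1 ≤ n → Q n ≤ Q 1 := by
  have step : ∀ n : ℕ, 1 ≤ n → Q (n + 1) ≤ Q n := by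
    intro n hn
    have h := hrel n hn
    have hdiss : 0 ≤ ν * Δt * G (n + 1) := mul_nonneg (mul_nonneg hν hΔt.le) (hG _)
    rw [hQ n hn, hQ (n + 1) (by omega), Nat.add_sub_cancel]
    nlinarith [sq_nonneg (R (n + 1) - 2 * R n + R (n - 1))]
  have mono : ∀ m n : ℕ, 1 ≤ m → m ≤ n → Q n ≤ Q m := by
    intro m n hm hmn
    induction n, hmn using Nat.le_induction with
    | base => exact le_rfl
    | succ k hk ih => exact (step k (hm.trans hk)).trans ih
  exact ⟨mono, fun n hn => mono 1 n le_rfl hn⟩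
end
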